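/- The intersection of the Markov spectrum M with the open interval ((11+35√87)/102, (56508+2716√87)/24687) consists of exactly one point, namely √33245/55, which is therefore an isolated point of M. Moreover, both endpoints (11+35√87)/102 and (56508+2716√87)/24687 belong to M. -/

import Mathlib

open Filter Set MeasureTheory
open scoped ENNReal

/-- Finite continued fraction `[a 0; a 1, ..., a n]`. -/
noncomputable def cfConv : (ℕ → ℝ) → ℕ → ℝ
  | a, 0 => a 0
  | a, n + 1 => a 0 + 1 / cfConv (fun i => a (i + 1)) n

/-- Value of the infinite continued fraction `[a 0; a 1, a 2, ...]`,
as the limit of its convergents. -/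
noncomputable def cfVal (a : ℕ → ℝ) : ℝ := limUnder atTop (cfConv a)

/-- `λ_k(α) = [α_k; α_{k+1}, ...] + [0; α_{k-1}, α_{k-2}, ...]`. -/
noncomputable def lambdaVal (α : ℤ → ℕ) (k : ℤ) : ℝ :=
  cfVal (fun n => (α (k + n) : ℝ)) +
  cfVal (fun n => if n = 0 then 0 else (α (k - n) : ℝ))

/-- The Markov value `m(α) = sup_{k ∈ ℤ} λ_k(α)`. -/
noncomputable def markovValue (α : ℤ → ℕ) : ℝ := ⨆ k : ℤ, lambdaVal α k

/-- The Markov spectrum. -/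
def markovSpectrum : Set ℝ :=
  { x | ∃ α : ℤ → ℕ, (∀ n, 0 < α n) ∧ BddAbove (range (lambdaVal α)) ∧
      markovValue α = x }

/-- The dimension function `d(t) = dim_H (M ∩ (-∞, t))`. -/
noncomputable def dimFun (t : ℝ) : ℝ≥0∞ := dimH (markovSpectrum ∩ Iio t)

/-!
If all `λ_k` lie below the right end of the gap, the sequence consists of ones and twos, and any
word is excluded whose value exceeds this bound however it is continued. The key estimate is that a
tail starting with `2` directly after `11` is at least `T = [2; 2, 1, 2, 1, 1, 2, 2, 1, ...]`: a
smaller tail has to read `221211` followed by another tail of the same kind, and the Möbius map of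
`221211` increases every number below its fixed point `T`, so the infimum of these tails is not
below `T`.

Suppose now that `λ_k` lies above the left end of the gap. Up to reflection the sequence reads
`21211` with the second `2` at position `k`. If a `2` follows, the letters further out are forced
until both tails are bounded below by `T`, and then `λ_k` is at most the left end. Hence a `1`
follows. The word `212111` in turn forces its surroundings, again by the estimate for `T`, to the
point where its mirror image appears on either side. Iterating, the sequence has period
`2111121221`, and `λ_k = √33245 / 55`. The end points are the values of palindromic sequences both
of whose tails equal `T`.
-/

/-! ### Elementary facts -/

/-- Every element of `s` below `c` dominates the image of another one, so `f (sInf s) ≤ sInf s`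
unless `c ≤ sInf s`; since `f` increases all points below `c`, the latter must hold. -/
lemma mem_lowerBounds_of_improving {ι : Type*} [ConditionallyCompleteLinearOrder ι] {s : Set ι}
    {f : ι → ι} {b c : ι} (hb : b ∈ lowerBounds s) (hf : MonotoneOn f (Ici b))
    (hlt : ∀ x, b ≤ x → x < c → x < f x) (hstep : ∀ y ∈ s, c ≤ y ∨ ∃ x ∈ s, f x ≤ y) :
    c ∈ lowerBounds s := by
  intro y hy
  by_contra! hyc
  have hinf : sInf s < c := (csInf_le ⟨b, hb⟩ hy).trans_lt hyc
  have hbinf : b ≤ sInf s := le_csInf ⟨y, hy⟩ hb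
  refine (lt_min hinf (hlt _ hbinf hinf)).not_ge (le_csInf ⟨y, hy⟩ fun z hz => ?_)
  rcases hstep z hz with hcz | ⟨x, hx, hxz⟩
  · exact min_le_of_left_le hcz
  · exact min_le_of_right_le
      ((hf hbinf (hb hx) (csInf_le ⟨b, hb⟩ hx)).trans hxz)

lemma eq_of_mul_sq_eq_of_pos {a b c x : ℝ} (ha : 0 < a) (hc : 0 < c) (hx : 0 < x)
    (h : a * x ^ 2 = b * x + c) : x = (b + √(b ^ 2 + 4 * a * c)) / (2 * a) := by
  have hsqrt : √(b ^ 2 + 4 * a * c) = 2 * a * x - b := by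
    rw [Real.sqrt_eq_iff_eq_sq (by positivity)]
    · linear_combination (-4) * a * h
    · have : 0 < x * (2 * a * x - b) := by nlinarith
      exact ((pos_iff_pos_of_mul_pos this).1 hx).le
  rw [hsqrt]
  field_simp
  ring

lemma exists_eq_mul_add (k : ℤ) {m : ℕ} (hm : 0 < m) : ∃ q : ℤ, ∃ r < m, k = q * m + r := by
  have hm' : (0 : ℤ) < m := by exact_mod_cast hm
  obtain ⟨r, hr⟩ := Int.eq_ofNat_of_zero_le (Int.emod_nonneg k hm'.ne')
  exact ⟨k / m, r, by exact_mod_cast hr ▸ Int.emod_lt_of_pos k hm',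
    by rw [← hr, Int.ediv_mul_add_emod]⟩

lemma forall_getD {ι : Type*} {p : ι → Prop} {l : List ι} {d : ι} (hd : p d)
    (hl : ∀ a ∈ l, p a) (i : ℕ) : p (l.getD i d) := by
  rcases lt_or_ge i l.length with hi | hi
  · rw [List.getD_eq_getElem _ _ hi]
    exact hl _ (List.getElem_mem hi)
  · rwa [List.getD_eq_default _ _ hi]

/-! ### Convergence of continued fractions -/

lemma abs_add_one_div_add_one_div_sub_le {a b x y : ℝ} (hb : 1 ≤ b) (hx : 1 ≤ x) (hy : 1 ≤ y) :
    |a + 1 / (b + 1 / x) - (a + 1 / (b + 1 / y))| ≤ |x - y| / 4 := by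
  have hbx : 2 ≤ b * x + 1 := by nlinarith
  have hby : 2 ≤ b * y + 1 := by nlinarith
  have hdiff : a + 1 / (b + 1 / x) - (a + 1 / (b + 1 / y))
      = (x - y) / ((b * x + 1) * (b * y + 1)) := by
    field_simp
    ring
  have hden : 4 ≤ (b * x + 1) * (b * y + 1) := by nlinarith
  rw [hdiff, abs_div, abs_of_pos (a := (b * x + 1) * (b * y + 1)) (by positivity)]
  gcongr

lemma cfConv_mem_Icc {a : ℕ → ℝ} (ha : ∀ i, 1 ≤ a (i + 1)) (n : ℕ) :
    cfConv a n ∈ Icc (a 0) (a 0 + 1) := by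
  induction n generalizing a with
  | zero => simp [cfConv]
  | succ n ih =>
    have hone : 1 ≤ cfConv (fun i => a (i + 1)) n :=
      (ha 0).trans (ih (a := fun i => a (i + 1)) fun i => ha (i + 1)).1
    have hle : 1 / cfConv (fun i => a (i + 1)) n ≤ 1 := div_le_one_of_le₀ hone (by positivity)
    exact ⟨le_add_of_nonneg_right (by positivity), add_le_add_right hle _⟩

lemma abs_cfConv_sub_le {a : ℕ → ℝ} (ha : ∀ i, 1 ≤ a (i + 1)) (j m n : ℕ) :
    |cfConv a (2 * j + m) - cfConv a (2 * j + n)| ≤ (1 / 4) ^ j := by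
  induction j generalizing a with
  | zero =>
    obtain ⟨hm, hm'⟩ := cfConv_mem_Icc ha m
    obtain ⟨hn, hn'⟩ := cfConv_mem_Icc ha n
    simp only [mul_zero, zero_add, pow_zero, abs_le]
    constructor <;> linarith
  | succ j ih =>
    have hone (i : ℕ) : 1 ≤ cfConv (fun i => a (i + 1 + 1)) i :=
      (ha 1).trans (cfConv_mem_Icc (a := fun i => a (i + 1 + 1)) (fun i => ha _) i).1
    rw [show 2 * (j + 1) + m = 2 * j + m + 1 + 1 by ring,
      show 2 * (j + 1) + n = 2 * j + n + 1 + 1 by ring, pow_succ, ← div_eq_mul_one_div]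
    exact (abs_add_one_div_add_one_div_sub_le (ha 0) (hone _) (hone _)).trans
      (div_le_div_of_nonneg_right (ih fun i => ha _) (by norm_num))

lemma tendsto_cfConv {a : ℕ → ℝ} (ha : ∀ i, 1 ≤ a (i + 1)) :
    Tendsto (cfConv a) atTop (nhds (cfVal a)) := by
  refine CauchySeq.tendsto_limUnder (Metric.cauchySeq_iff.2 fun ε hε => ?_)
  obtain ⟨j, hj⟩ := exists_pow_lt_of_lt_one hε (by norm_num : (1 / 4 : ℝ) < 1)
  refine ⟨2 * j, fun m hm n hn => ?_⟩
  obtain ⟨m, rfl⟩ := Nat.exists_eq_add_of_le hm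
  obtain ⟨n, rfl⟩ := Nat.exists_eq_add_of_le hn
  exact (abs_cfConv_sub_le ha j m n).trans_lt hj

lemma cfVal_mem_Icc {a : ℕ → ℝ} (ha : ∀ i, 1 ≤ a (i + 1)) : cfVal a ∈ Icc (a 0) (a 0 + 1) :=
  isClosed_Icc.mem_of_tendsto (tendsto_cfConv ha) (.of_forall (cfConv_mem_Icc ha))

lemma cfVal_eq {a : ℕ → ℝ} (ha : ∀ i, 1 ≤ a (i + 1)) :
    cfVal a = a 0 + 1 / cfVal (fun i => a (i + 1)) := by
  have hlim := tendsto_cfConv (a := fun i => a (i + 1)) fun i => ha (i + 1)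
  have hne : cfVal (fun i => a (i + 1)) ≠ 0 :=
    (one_pos.trans_le ((ha 0).trans
      (cfVal_mem_Icc (a := fun i => a (i + 1)) fun i => ha (i + 1)).1)).ne'
  refine Tendsto.limUnder_eq ((tendsto_add_atTop_iff_nat 1).1 ?_)
  exact (tendsto_const_nhds.div hlim hne).const_add (a 0)

/-! ### Tails of bi-infinite sequences -/

/-- The right tail `[α_k; α_{k+1}, α_{k+2}, ...]`. -/
noncomputable def rightTail (α : ℤ → ℕ) (k : ℤ) : ℝ := cfVal fun n => (α (k + n) : ℝ)

/-- The left tail `[α_k; α_{k-1}, α_{k-2}, ...]`; unlike in `lambdaVal`, the leading term is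
`α_k` itself. -/
noncomputable def leftTail (α : ℤ → ℕ) (k : ℤ) : ℝ := cfVal fun n => (α (k - n) : ℝ)

/-- The sequence `α` read backwards, used to transfer facts about right tails to left tails. -/
def reflect (α : ℤ → ℕ) : ℤ → ℕ := fun n => α (-n)

section Tails

variable {α : ℤ → ℕ} {k : ℤ}

@[simp] lemma reflect_apply (α : ℤ → ℕ) (n : ℤ) : reflect α n = α (-n) := rfl

@[simp] lemma reflect_reflect (α : ℤ → ℕ) : reflect (reflect α) = α := by
  ext n
  simp

lemma rightTail_reflect (α : ℤ → ℕ) (k : ℤ) : rightTail (reflect α) k = leftTail α (-k) := by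
  simp only [rightTail, leftTail, reflect_apply, neg_add']

lemma leftTail_reflect (α : ℤ → ℕ) (k : ℤ) : leftTail (reflect α) k = rightTail α (-k) := by
  rw [← neg_neg k, ← rightTail_reflect, reflect_reflect, neg_neg]

lemma rightTail_eq (hα : ∀ n, 0 < α n) (k : ℤ) :
    rightTail α k = α k + 1 / rightTail α (k + 1) := by
  rw [rightTail, cfVal_eq fun i => by exact_mod_cast hα _]
  simp [rightTail, add_assoc, add_comm (1 : ℤ)]

lemma leftTail_eq (hα : ∀ n, 0 < α n) (k : ℤ) :
    leftTail α k = α k + 1 / leftTail α (k - 1) := by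
  have := rightTail_eq (α := reflect α) (fun n => hα _) (-k)
  simpa only [rightTail_reflect, reflect_apply, neg_add', neg_neg] using this

lemma rightTail_mem_Icc (hα : ∀ n, 0 < α n) (k : ℤ) :
    rightTail α k ∈ Icc (α k : ℝ) (α k + 1) := by
  simpa [rightTail] using
    cfVal_mem_Icc (a := fun n => (α (k + n) : ℝ)) fun i => by exact_mod_cast hα _

lemma one_le_rightTail (hα : ∀ n, 0 < α n) (k : ℤ) : 1 ≤ rightTail α k :=
  le_trans (by exact_mod_cast hα k) (rightTail_mem_Icc hα k).1

lemma one_le_leftTail (hα : ∀ n, 0 < α n) (k : ℤ) : 1 ≤ leftTail α k := by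
  simpa [rightTail_reflect] using one_le_rightTail (α := reflect α) (fun n => hα _) (-k)

lemma lambdaVal_eq_rightTail_add (hα : ∀ n, 0 < α n) (k : ℤ) :
    lambdaVal α k = rightTail α k + 1 / leftTail α (k - 1) := by
  have hleft (i : ℕ) : (1 : ℝ) ≤ if i + 1 = 0 then 0 else (α (k - (i + 1 : ℕ)) : ℝ) := by
    simpa using Nat.succ_le_of_lt (hα _)
  rw [lambdaVal, cfVal_eq (a := fun n : ℕ => if n = 0 then 0 else (α (k - n) : ℝ)) hleft]
  simp [rightTail, leftTail, sub_sub, add_comm]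

lemma lambdaVal_eq_leftTail_add (hα : ∀ n, 0 < α n) (k : ℤ) :
    lambdaVal α k = leftTail α k + 1 / rightTail α (k + 1) := by
  rw [lambdaVal_eq_rightTail_add hα, rightTail_eq hα, leftTail_eq hα k]
  ring

lemma lambdaVal_reflect (hα : ∀ n, 0 < α n) (k : ℤ) :
    lambdaVal (reflect α) k = lambdaVal α (-k) := by
  rw [lambdaVal_eq_rightTail_add (α := reflect α) fun n => hα _, lambdaVal_eq_leftTail_add hα,
    rightTail_reflect, leftTail_reflect, neg_sub', sub_neg_eq_add]

lemma lambdaVal_periodic {c : ℤ} (hα : Function.Periodic α c) :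
    Function.Periodic (lambdaVal α) c := fun k => by
  have hright (n : ℤ) : α (k + c + n) = α (k + n) := by rw [add_right_comm, hα]
  have hleft (n : ℤ) : α (k + c - n) = α (k - n) := by rw [add_sub_right_comm, hα]
  simp only [lambdaVal, hright, hleft]

lemma add_two_div_le_lambdaVal (hα : ∀ n, 0 < α n) {M : ℕ} (hM : ∀ n, α n ≤ M) (k : ℤ) :
    α k + 2 / (M + 1) ≤ lambdaVal α k := by
  have inv_le (β : ℤ → ℕ) (hβ : ∀ n, 0 < β n) (hβM : ∀ n, β n ≤ M) (j : ℤ) :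
      1 / ((M : ℝ) + 1) ≤ 1 / rightTail β j := by
    have hle : (β j : ℝ) ≤ M := by exact_mod_cast hβM j
    exact one_div_le_one_div_of_le (one_pos.trans_le (one_le_rightTail hβ j))
      ((rightTail_mem_Icc hβ j).2.trans (add_le_add_left hle 1))
  have hright := inv_le α hα hM (k + 1)
  have hleft := inv_le (reflect α) (fun n => hα _) (fun n => hM _) (-(k - 1))
  rw [rightTail_reflect, neg_neg] at hleft
  rw [lambdaVal_eq_rightTail_add hα, rightTail_eq hα]
  have htwo : 2 / ((M : ℝ) + 1) = 1 / (M + 1) + 1 / (M + 1) := by ring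
  linarith

end Tails

/-! ### Finite continued fractions and windows -/

/-- `[a₀; a₁, ..., aₙ, x]` for the word `l = a₀ a₁ ... aₙ`, as a function of its last entry `x`. -/
noncomputable def cfEval (l : List ℕ) (x : ℝ) : ℝ := l.foldr (fun (a : ℕ) y => (a : ℝ) + 1 / y) x

@[simp] lemma cfEval_nil (x : ℝ) : cfEval [] x = x := rfl

@[simp] lemma cfEval_cons (a : ℕ) (l : List ℕ) (x : ℝ) :
    cfEval (a :: l) x = a + 1 / cfEval l x := rfl

lemma cfEval_append (l m : List ℕ) (x : ℝ) : cfEval (l ++ m) x = cfEval l (cfEval m x) := by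
  simp only [cfEval, List.foldr_append]

lemma cfEval_pos (l : List ℕ) {x : ℝ} (hx : 0 < x) : 0 < cfEval l x := by
  induction l with
  | nil => exact hx
  | cons a l ih => rw [cfEval_cons]; positivity

lemma cfEval_monotoneOn_and_antitoneOn (l : List ℕ) :
    (Even l.length → MonotoneOn (cfEval l) (Ioi 0)) ∧
      (Odd l.length → AntitoneOn (cfEval l) (Ioi 0)) := by
  induction l with
  | nil => simp [MonotoneOn]
  | cons a l ih =>
    simp only [List.length_cons, Nat.even_add_one, Nat.odd_add_one, Nat.not_even_iff_odd,
      Nat.not_odd_iff_even]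
    exact ⟨fun hl x hx y hy hxy => add_le_add_right
        (one_div_le_one_div_of_le (cfEval_pos l hy) (ih.2 hl hx hy hxy)) _,
      fun hl x hx y hy hxy => add_le_add_right
        (one_div_le_one_div_of_le (cfEval_pos l hx) (ih.1 hl hx hy hxy)) _⟩

lemma cfEval_monotoneOn {l : List ℕ} (hl : Even l.length) : MonotoneOn (cfEval l) (Ioi 0) :=
  (cfEval_monotoneOn_and_antitoneOn l).1 hl

lemma cfEval_antitoneOn {l : List ℕ} (hl : Odd l.length) : AntitoneOn (cfEval l) (Ioi 0) :=
  (cfEval_monotoneOn_and_antitoneOn l).2 hl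

/-- `α` carries the word `l` at the positions `k, k + 1, k + 2, ...`. -/
def ReadsRight (α : ℤ → ℕ) : ℤ → List ℕ → Prop
  | _, [] => True
  | k, a :: l => α k = a ∧ ReadsRight α (k + 1) l

/-- `α` carries the word `l` at the positions `k, k - 1, k - 2, ...`. -/
def ReadsLeft (α : ℤ → ℕ) : ℤ → List ℕ → Prop
  | _, [] => True
  | k, a :: l => α k = a ∧ ReadsLeft α (k - 1) l

/-- `α` reads `u` leftwards from position `k - 1` and `v` rightwards from position `k`, in other
words it carries `... u₁ u₀ | v₀ v₁ ...` with `v₀` at position `k`. -/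
structure IsWindow (α : ℤ → ℕ) (k : ℤ) (u v : List ℕ) : Prop where
  left : ReadsLeft α (k - 1) u
  right : ReadsRight α k v

section Words

variable {α : ℤ → ℕ} {k : ℤ} {l u v w : List ℕ}

lemma readsRight_congr {β : ℤ → ℕ} (h : ∀ n, k ≤ n → α n = β n) :
    ReadsRight α k l ↔ ReadsRight β k l := by
  induction l generalizing k with
  | nil => rfl
  | cons a l ih => rw [ReadsRight, ReadsRight, h k le_rfl, ih fun n hn => h n (by linarith)]

lemma ReadsRight.apply_add (h : ReadsRight α k l) (i : ℕ) (hi : i < l.length) :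
    α (k + i) = l[i] := by
  induction l generalizing k i with
  | nil => simp at hi
  | cons a l ih =>
    cases i with
    | zero => simpa using h.1
    | succ i => simpa [add_assoc, add_comm (1 : ℤ)] using ih h.2 i (by simpa using hi)

lemma readsRight_append :
    ReadsRight α k (v ++ w) ↔ ReadsRight α k v ∧ ReadsRight α (k + v.length) w := by
  induction v generalizing k with
  | nil => simp [ReadsRight]
  | cons a v ih =>
    simp only [List.cons_append, ReadsRight, ih, and_assoc, List.length_cons, Nat.cast_add,
      Nat.cast_one, add_assoc, add_comm (1 : ℤ)]

lemma readsRight_add_of_periodic {c : ℤ} (hα : Function.Periodic α c) :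
    ReadsRight α (k + c) l ↔ ReadsRight α k l := by
  induction l generalizing k with
  | nil => rfl
  | cons a l ih => rw [ReadsRight, ReadsRight, hα, add_right_comm, ih]

lemma readsRight_reflect : ReadsRight (reflect α) k l ↔ ReadsLeft α (-k) l := by
  induction l generalizing k with
  | nil => rfl
  | cons a l ih => simp only [ReadsRight, ReadsLeft, ih, reflect_apply, neg_add']

lemma readsLeft_reflect : ReadsLeft (reflect α) k l ↔ ReadsRight α (-k) l := by
  rw [← neg_neg k, ← readsRight_reflect, reflect_reflect, neg_neg]

lemma readsLeft_append :
    ReadsLeft α k (u ++ w) ↔ ReadsLeft α k u ∧ ReadsLeft α (k - u.length) w := by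
  rw [← neg_neg k, ← readsRight_reflect, readsRight_append, readsRight_reflect,
    readsRight_reflect, neg_add', neg_neg]

lemma rightTail_eq_cfEval (hα : ∀ n, 0 < α n) (hl : ReadsRight α k l) :
    rightTail α k = cfEval l (rightTail α (k + l.length)) := by
  induction l generalizing k with
  | nil => simp
  | cons a l ih =>
    rw [rightTail_eq hα, hl.1, ih hl.2, cfEval_cons, List.length_cons, Nat.cast_succ,
      add_assoc, add_comm (1 : ℤ)]

lemma leftTail_eq_cfEval (hα : ∀ n, 0 < α n) (hl : ReadsLeft α k l) :
    leftTail α k = cfEval l (leftTail α (k - l.length)) := by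
  have := rightTail_eq_cfEval (α := reflect α) (k := -k) (fun n => hα _)
    (readsRight_reflect.2 (by rwa [neg_neg]))
  simpa only [rightTail_reflect, neg_add', neg_neg] using this

lemma lambdaVal_eq_cfEval (hα : ∀ n, 0 < α n) (hw : IsWindow α k u v) :
    lambdaVal α k = cfEval v (rightTail α (k + v.length)) +
      1 / cfEval u (leftTail α (k - 1 - u.length)) := by
  rw [lambdaVal_eq_rightTail_add hα, ← rightTail_eq_cfEval hα hw.right,
    ← leftTail_eq_cfEval hα hw.left]

lemma cfEval_rightTail_eq_self (hα : ∀ n, 0 < α n) (hl : ReadsRight α k l)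
    (hper : ∀ n, k ≤ n → α (n + l.length) = α n) :
    cfEval l (rightTail α k) = rightTail α k := by
  have hshift : rightTail α (k + l.length) = rightTail α k := by
    simp only [rightTail, add_right_comm k (l.length : ℤ), hper _ (le_add_of_nonneg_right
      (Int.natCast_nonneg _))]
  rw [← hshift, ← rightTail_eq_cfEval hα hl, hshift]

lemma cfEval_leftTail_eq_self (hα : ∀ n, 0 < α n) (hl : ReadsLeft α k l)
    (hper : ∀ n, n ≤ k → α (n - l.length) = α n) :
    cfEval l (leftTail α k) = leftTail α k := by
  have := cfEval_rightTail_eq_self (α := reflect α) (k := -k) (fun n => hα _)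
    (readsRight_reflect.2 (by rwa [neg_neg])) fun n hn => by
      simpa only [reflect_apply, neg_add'] using hper (-n) (by linarith)
  simpa only [rightTail_reflect, neg_neg] using this

lemma leftTail_sub_of_symmetric {d : ℤ} (hsymm : ∀ n, α (d - n) = α n) (k : ℤ) :
    leftTail α (d - k) = rightTail α k := by
  simp only [leftTail, rightTail, sub_sub, hsymm]

lemma lambdaVal_sub_of_symmetric {d : ℤ} (hα : ∀ n, 0 < α n) (hsymm : ∀ n, α (d - n) = α n)
    (k : ℤ) : lambdaVal α (d - k) = lambdaVal α k := by
  rw [lambdaVal_eq_leftTail_add hα, lambdaVal_eq_rightTail_add hα,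
    leftTail_sub_of_symmetric hsymm, sub_add, ← leftTail_sub_of_symmetric hsymm (d - (k - 1)),
    sub_sub_cancel]

lemma periodic_of_forall_readsRight (hl : l ≠ [])
    (h : ∀ q : ℤ, ReadsRight α (k + q * l.length) l) : Function.Periodic α l.length := by
  intro n
  obtain ⟨q, r, hr, hn⟩ := exists_eq_mul_add (n - k) (List.length_pos_iff.2 hl)
  have hvalue (q : ℤ) : α (k + q * l.length + r) = l[r] := (h q).apply_add r hr
  rw [show n = k + q * l.length + r by linarith, hvalue, ← hvalue (q + 1)]
  congr 1
  ring

namespace IsWindow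

protected lemma reflect (hw : IsWindow α k u v) : IsWindow (reflect α) (1 - k) v u where
  left := readsLeft_reflect.2 (by simpa using hw.right)
  right := readsRight_reflect.2 (by simpa using hw.left)

lemma shift_right (hw : IsWindow α k u (w ++ v)) :
    IsWindow α (k + w.length) (w.reverse ++ u) v := by
  induction w generalizing k u with
  | nil => simpa using hw
  | cons a w ih =>
    have : IsWindow α (k + 1) (a :: u) (w ++ v) :=
      ⟨by simpa [ReadsLeft] using ⟨hw.right.1, hw.left⟩, hw.right.2⟩
    simpa [add_assoc, add_comm (1 : ℤ)] using ih this

lemma shift_left (hw : IsWindow α k (w ++ u) v) :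
    IsWindow α (k - w.length) u (w.reverse ++ v) := by
  induction w generalizing k v with
  | nil => simpa using hw
  | cons a w ih =>
    have : IsWindow α (k - 1) (w ++ u) (a :: v) :=
      ⟨hw.left.2, hw.left.1, by simpa using hw.right⟩
    simpa [sub_sub, add_comm (1 : ℤ)] using ih this

lemma of_append {u' v' : List ℕ} (hw : IsWindow α k (u ++ u') (v ++ v')) : IsWindow α k u v :=
  ⟨(readsLeft_append.1 hw.left).1, (readsRight_append.1 hw.right).1⟩

end IsWindow

lemma ReadsRight.isWindow_add (hl : ReadsRight α k l) {r : ℕ} (hr : r ≤ l.length) :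
    IsWindow α (k + r) (l.take r).reverse (l.drop r) := by
  have := IsWindow.shift_right (u := []) (w := l.take r) (v := l.drop r)
    ⟨trivial, (List.take_append_drop r l).symm ▸ hl⟩
  rwa [List.append_nil, List.length_take_of_le hr] at this

end Words

/-! ### Sequences of ones and twos -/

/-- All letters of the sequence are `1` or `2`. -/
def IsBinary (α : ℤ → ℕ) : Prop := ∀ n, α n = 1 ∨ α n = 2

/-- The least possible value, up to rounding, of a tail of a binary sequence that starts with the
word `l`. The remaining tail lies between `(1 + √3) / 2 = [1; 2, 1, 2, ...]` and
`1 + √3 = [2; 1, 2, 1, ...]`, which are rounded outwards to `1.366` and `2.7321`. -/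
noncomputable def wordLower (l : List ℕ) : ℝ := cfEval l (if Even l.length then 1.366 else 2.7321)

/-- The greatest possible value, up to rounding, of a tail of a binary sequence that starts with
the word `l`; see `wordLower`. -/
noncomputable def wordUpper (l : List ℕ) : ℝ := cfEval l (if Even l.length then 2.7321 else 1.366)

/-- Lower bound for `λ_k` of a binary sequence that shows the window `u | v` at `k`. -/
noncomputable def windowLower (u v : List ℕ) : ℝ := wordLower v + 1 / wordUpper u

/-- Upper bound for `λ_k` of a binary sequence that shows the window `u | v` at `k`. -/
noncomputable def windowUpper (u v : List ℕ) : ℝ := wordUpper v + 1 / wordLower u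

lemma wordLower_pos (l : List ℕ) : 0 < wordLower l := cfEval_pos l (by split_ifs <;> norm_num)

lemma isBinary_of_lambdaVal_lt {α : ℤ → ℕ} (hα : ∀ n, 0 < α n)
    (hlt : ∀ k, lambdaVal α k < 7 / 2) : IsBinary α := by
  have le_lambdaVal (n : ℤ) : (α n : ℝ) ≤ lambdaVal α n := by
    have hleft : 0 ≤ 1 / leftTail α (n - 1) :=
      one_div_nonneg.2 (zero_le_one.trans (one_le_leftTail hα _))
    linarith [lambdaVal_eq_rightTail_add hα n, (rightTail_mem_Icc hα n).1]
  have hthree (n : ℤ) : α n ≤ 3 := by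
    have : (α n : ℝ) < 4 := by linarith [le_lambdaVal n, hlt n]
    exact Nat.le_of_lt_succ (by exact_mod_cast this)
  intro n
  have : (α n : ℝ) < 3 := by
    have := add_two_div_le_lambdaVal hα hthree n
    norm_num at this
    linarith [hlt n]
  have : α n < 3 := by exact_mod_cast this
  have := hα n
  omega

namespace IsBinary

variable {α : ℤ → ℕ} {k : ℤ} {l u v : List ℕ}

lemma pos (h : IsBinary α) (n : ℤ) : 0 < α n := by
  rcases h n with hn | hn <;> simp [hn]

protected lemma reflect (h : IsBinary α) : IsBinary (reflect α) := fun n => h (-n)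

lemma le_rightTail (h : IsBinary α) (k : ℤ) : 1.366 ≤ rightTail α k := by
  refine mem_lowerBounds_of_improving (s := range (rightTail α)) (f := cfEval [1, 2]) (b := 1)
    (forall_mem_range.2 (one_le_rightTail h.pos)) ?_ ?_ ?_ (mem_range_self k)
  · exact (cfEval_monotoneOn (by decide)).mono (Ici_subset_Ioi.2 one_pos)
  · intro x hx hxc
    simp only [cfEval_cons, cfEval_nil, Nat.cast_one, Nat.cast_ofNat]
    rw [← sub_pos]
    have : 1 + 1 / (2 + 1 / x) - x = (1 + 2 * x - 2 * x ^ 2) / (2 * x + 1) := by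
      field_simp
      ring
    rw [this]
    have : 0 < 1 + 2 * x - 2 * x ^ 2 := by nlinarith
    positivity
  · refine forall_mem_range.2 fun j => Or.inr ⟨_, mem_range_self (j + 1 + 1), ?_⟩
    have hfst : (1 : ℝ) ≤ α j := by exact_mod_cast h.pos j
    have hsnd : (α (j + 1) : ℝ) ≤ 2 := by rcases h (j + 1) with hj | hj <;> norm_num [hj]
    have hx := one_le_rightTail h.pos (j + 1 + 1)
    have hpos : (0 : ℝ) < α (j + 1) := by exact_mod_cast h.pos _
    rw [rightTail_eq h.pos j, rightTail_eq h.pos (j + 1)]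
    simp only [cfEval_cons, cfEval_nil, Nat.cast_one, Nat.cast_ofNat]
    gcongr

lemma rightTail_le (h : IsBinary α) (k : ℤ) : rightTail α k ≤ 2.7321 := by
  have hk : (α k : ℝ) ≤ 2 := by rcases h k with hk | hk <;> norm_num [hk]
  have hinv := one_div_le_one_div_of_le (by norm_num) (h.le_rightTail (k + 1))
  rw [rightTail_eq h.pos]
  norm_num at hinv ⊢
  linarith

lemma rightTail_mem_Icc (h : IsBinary α) (hl : ReadsRight α k l) :
    rightTail α k ∈ Icc (wordLower l) (wordUpper l) := by
  have hlow := h.le_rightTail (k + l.length)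
  have hupp := h.rightTail_le (k + l.length)
  have hpos : 0 < rightTail α (k + l.length) := by linarith
  rw [rightTail_eq_cfEval h.pos hl, wordLower, wordUpper]
  by_cases hlen : Even l.length
  · simp only [if_pos hlen]
    exact ⟨cfEval_monotoneOn hlen (by norm_num) hpos hlow,
      cfEval_monotoneOn hlen hpos (by norm_num) hupp⟩
  · simp only [if_neg hlen]
    rw [Nat.not_even_iff_odd] at hlen
    exact ⟨cfEval_antitoneOn hlen hpos (by norm_num) hupp,
      cfEval_antitoneOn hlen (by norm_num) hpos hlow⟩

lemma leftTail_mem_Icc (h : IsBinary α) (hl : ReadsLeft α k l) :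
    leftTail α k ∈ Icc (wordLower l) (wordUpper l) := by
  have := h.reflect.rightTail_mem_Icc (readsRight_reflect.2 ((neg_neg k).symm ▸ hl))
  rwa [rightTail_reflect, neg_neg] at this

lemma lambdaVal_mem_Icc (h : IsBinary α) (hw : IsWindow α k u v) :
    lambdaVal α k ∈ Icc (windowLower u v) (windowUpper u v) := by
  have hright := h.rightTail_mem_Icc hw.right
  have hleft := h.leftTail_mem_Icc hw.left
  rw [lambdaVal_eq_rightTail_add h.pos]
  exact ⟨add_le_add hright.1
      (one_div_le_one_div_of_le ((wordLower_pos u).trans_le hleft.1) hleft.2),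
    add_le_add hright.2 (one_div_le_one_div_of_le (wordLower_pos u) hleft.1)⟩

lemma not_isWindow_of_rightTail_lt (h : IsBinary α) (hlt : rightTail α k < wordLower v) :
    ¬ IsWindow α k u v :=
  fun hw => ((h.rightTail_mem_Icc hw.right).1.trans_lt hlt).false

lemma not_isWindow_of_lt_lambdaVal (h : IsBinary α) (hlt : windowUpper u v < lambdaVal α k) :
    ¬ IsWindow α k u v :=
  fun hw => ((h.lambdaVal_mem_Icc hw).2.trans_lt hlt).false

lemma right_one (h : IsBinary α) (hw : IsWindow α k u v) (hne : ¬ IsWindow α k u (v ++ [2])) :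
    IsWindow α k u (v ++ [1]) := by
  rcases h (k + v.length) with h1 | h2
  · exact ⟨hw.left, readsRight_append.2 ⟨hw.right, h1, trivial⟩⟩
  · exact absurd ⟨hw.left, readsRight_append.2 ⟨hw.right, h2, trivial⟩⟩ hne

lemma right_two (h : IsBinary α) (hw : IsWindow α k u v) (hne : ¬ IsWindow α k u (v ++ [1])) :
    IsWindow α k u (v ++ [2]) :=
  by_contra fun hnot => hne (h.right_one hw hnot)

lemma left_one (h : IsBinary α) (hw : IsWindow α k u v) (hne : ¬ IsWindow α k (u ++ [2]) v) :
    IsWindow α k (u ++ [1]) v := by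
  rcases h (k - 1 - u.length) with h1 | h2
  · exact ⟨readsLeft_append.2 ⟨hw.left, h1, trivial⟩, hw.right⟩
  · exact absurd ⟨readsLeft_append.2 ⟨hw.left, h2, trivial⟩, hw.right⟩ hne

lemma left_two (h : IsBinary α) (hw : IsWindow α k u v) (hne : ¬ IsWindow α k (u ++ [1]) v) :
    IsWindow α k (u ++ [2]) v :=
  by_contra fun hnot => hne (h.left_one hw hnot)

end IsBinary

/-! ### The end points of the gap -/

/-- The period of the tails of the sequences that realise the end points of the gap. -/
abbrev tailWord : List ℕ := [2, 2, 1, 2, 1, 1]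

/-- The value `[2; 2, 1, 2, 1, 1, 2, 2, 1, ...]` of the tail with period `tailWord`. -/
noncomputable def tailValue : ℝ := (17 + 3 * √87) / 19

/-- The left end point of the gap, in the form in which it arises: the sequence reads
`112` and then `tailWord` periodically to the right, and `1211` and then `tailWord` to the left. -/
noncomputable def gapLeft : ℝ := cfEval [2, 1, 1] tailValue + 1 / cfEval [1, 2, 1, 1] tailValue

/-- The right end point of the gap, in the form in which it arises: the sequence reads
`21` and then `tailWord` to the right, and `111121` and then `tailWord` to the left. -/
noncomputable def gapRight : ℝ :=
  cfEval [2, 1] tailValue + 1 / cfEval [1, 1, 1, 1, 2, 1] tailValue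

lemma sqrt_eightySeven_mem_Ioo : √87 ∈ Ioo (9.327379 : ℝ) 9.3273791 :=
  ⟨Real.lt_sqrt_of_sq_lt (by norm_num), (Real.sqrt_lt' (by norm_num)).2 (by norm_num)⟩

lemma tailValue_mem_Ioo : tailValue ∈ Ioo (2.367 : ℝ) 2.368 := by
  obtain ⟨hlow, hupp⟩ := sqrt_eightySeven_mem_Ioo
  constructor <;> rw [tailValue] <;> linarith

lemma gapLeft_eq : gapLeft = (11 + 35 * √87) / 102 := by
  have hsq : √87 ^ 2 = 87 := Real.sq_sqrt (by norm_num)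
  simp only [gapLeft, tailValue, cfEval_cons, cfEval_nil, Nat.cast_one, Nat.cast_ofNat]
  field_simp
  ring_nf
  simp only [show √87 ^ 3 = √87 ^ 2 * √87 by ring, hsq]
  ring

lemma gapRight_eq : gapRight = (56508 + 2716 * √87) / 24687 := by
  have hsq : √87 ^ 2 = 87 := Real.sq_sqrt (by norm_num)
  simp only [gapRight, tailValue, cfEval_cons, cfEval_nil, Nat.cast_one, Nat.cast_ofNat]
  field_simp
  ring_nf
  simp only [show √87 ^ 3 = √87 ^ 2 * √87 by ring, hsq]
  ring

lemma lt_gapLeft : 3.3084 < gapLeft := by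
  rw [gapLeft_eq]
  linarith [sqrt_eightySeven_mem_Ioo.1]

lemma gapRight_lt : gapRight < 3.315153 := by
  rw [gapRight_eq]
  linarith [sqrt_eightySeven_mem_Ioo.2]

lemma sqrt_div_mem_Ioo : √33245 / 55 ∈ Ioo gapLeft gapRight := by
  have hlow : 182.3 < √33245 := Real.lt_sqrt_of_sq_lt (by norm_num)
  have hupp : √33245 < 182.3325 := (Real.sqrt_lt' (by norm_num)).2 (by norm_num)
  obtain ⟨h87, h87'⟩ := sqrt_eightySeven_mem_Ioo
  rw [gapLeft_eq, gapRight_eq]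
  constructor <;> linarith

lemma cfEval_tailWord {x : ℝ} (hx : 0 < x) :
    cfEval tailWord x = (45 * x + 26) / (19 * x + 11) := by
  simp only [cfEval_cons, cfEval_nil, Nat.cast_one, Nat.cast_ofNat]
  field_simp
  ring

lemma tailValue_quadratic : 19 * tailValue ^ 2 = 34 * tailValue + 26 := by
  have hsq : √87 ^ 2 = 87 := Real.sq_sqrt (by norm_num)
  rw [tailValue]
  linear_combination (9 / 19) * hsq

lemma cfEval_tailWord_eq_self_iff {x : ℝ} (hx : 0 < x) :
    cfEval tailWord x = x ↔ x = tailValue := by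
  rw [cfEval_tailWord hx, div_eq_iff (by positivity)]
  refine ⟨fun h => ?_, fun h => by rw [h]; linear_combination -tailValue_quadratic⟩
  have hsqrt : √(34 ^ 2 + 4 * 19 * 26) = 6 * √87 := by
    rw [show (34 ^ 2 + 4 * 19 * 26 : ℝ) = 6 ^ 2 * 87 by norm_num, Real.sqrt_mul (by norm_num),
      Real.sqrt_sq (by norm_num)]
  rw [eq_of_mul_sq_eq_of_pos (a := 19) (b := 34) (c := 26) (by norm_num) (by norm_num) hx
    (by linear_combination -h), hsqrt, tailValue]
  ring

lemma lt_cfEval_tailWord {x : ℝ} (hx : 1 ≤ x) (hlt : x < tailValue) : x < cfEval tailWord x := by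
  have hT := tailValue_mem_Ioo.1
  rw [cfEval_tailWord (by linarith), lt_div_iff₀ (by linarith)]
  have : 0 < (tailValue - x) * (19 * (tailValue + x) - 34) :=
    mul_pos (by linarith) (by linarith)
  linarith [tailValue_quadratic]

/-! ### Admissible sequences -/

/-- Binary sequences all of whose values `λ_k` lie below the right end of the gap. -/
structure IsAdmissible (α : ℤ → ℕ) : Prop where
  binary : IsBinary α
  lambdaVal_lt : ∀ k, lambdaVal α k < gapRight

namespace IsAdmissible

variable {α : ℤ → ℕ} {k : ℤ} {u v : List ℕ}

protected lemma reflect (h : IsAdmissible α) : IsAdmissible (reflect α) where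
  binary := h.binary.reflect
  lambdaVal_lt j := by
    rw [lambdaVal_reflect h.binary.pos]
    exact h.lambdaVal_lt _

lemma not_isWindow (h : IsAdmissible α) (huv : 3.315153 ≤ windowLower u v) :
    ¬ IsWindow α k u v := fun hw => by
  linarith [(h.binary.lambdaVal_mem_Icc hw).1, h.lambdaVal_lt k, gapRight_lt]

/-- The next six letters are forced one by one: each time the other letter either makes the tail
larger than `2.368` or creates a forbidden word. -/
lemma isWindow_tailWord_append_two (h : IsAdmissible α) (hw : IsWindow α k [1, 1] [2])
    (hlt : rightTail α k < 2.368) : IsWindow α k [1, 1] (tailWord ++ [2]) := by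
  have not_isWindow_of_le {v : List ℕ} (hv : 2.368 ≤ wordLower v) : ¬ IsWindow α k [1, 1] v :=
    h.binary.not_isWindow_of_rightTail_lt (hlt.trans_le hv)
  have h₂ : IsWindow α k [1, 1] [2, 2] :=
    h.binary.right_two hw (not_isWindow_of_le (by norm_num [wordLower]))
  have h₃ : IsWindow α k [1, 1] [2, 2, 1] :=
    h.binary.right_one h₂ (not_isWindow_of_le (by norm_num [wordLower]))
  have h₄ : IsWindow α k [1, 1] [2, 2, 1, 2] :=
    h.binary.right_two h₃ (not_isWindow_of_le (by norm_num [wordLower]))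
  have h₅ : IsWindow α k [1, 1] [2, 2, 1, 2, 1] :=
    h.binary.right_one h₄ (not_isWindow_of_le (by norm_num [wordLower]))
  have h₅' : IsWindow α (k + 3) [1, 2, 2, 1, 1] [2, 1] := h₅.shift_right (w := [2, 2, 1])
  have h₆ : IsWindow α (k + 3) [1, 2, 2, 1, 1] [2, 1, 1] := h.binary.right_one h₅'
    (h.not_isWindow (by norm_num [windowLower, wordLower, wordUpper]))
  have h₇ : IsWindow α (k + 3) [1, 2, 2, 1, 1] [2, 1, 1, 2] := h.binary.right_two h₆
    (h.not_isWindow (by norm_num [windowLower, wordLower, wordUpper]))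
  simpa using h₇.shift_left (w := [1, 2, 2])

lemma tailValue_le_rightTail (h : IsAdmissible α) (hw : IsWindow α k [1, 1] [2]) :
    tailValue ≤ rightTail α k := by
  have hα := h.binary.pos
  refine mem_lowerBounds_of_improving (s := rightTail α '' {j | IsWindow α j [1, 1] [2]})
    (f := cfEval tailWord) (b := 1) (forall_mem_image.2 fun j _ => one_le_rightTail hα j)
    ((cfEval_monotoneOn (by decide)).mono (Ici_subset_Ioi.2 one_pos))
    (fun x => lt_cfEval_tailWord) (forall_mem_image.2 fun j hj => ?_) (mem_image_of_mem _ hw)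
  rcases lt_or_ge (rightTail α j) 2.368 with hlt | hge
  · have hj' := h.isWindow_tailWord_append_two hj hlt
    have hnext : IsWindow α (j + 6) [1, 1] [2] :=
      (hj'.shift_right (w := tailWord)).of_append (u := [1, 1]) (v := [2]) (v' := [])
    exact Or.inr ⟨_, mem_image_of_mem _ hnext,
      (rightTail_eq_cfEval hα (readsRight_append.1 hj'.right).1).ge⟩
  · exact Or.inl (tailValue_mem_Ioo.2.le.trans hge)

lemma tailValue_le_leftTail (h : IsAdmissible α) (hw : IsWindow α k [2] [1, 1]) :
    tailValue ≤ leftTail α (k - 1) := by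
  simpa [rightTail_reflect] using h.reflect.tailValue_le_rightTail hw.reflect

end IsAdmissible

/-! ### Markers -/

/-- The word `212111` that separates the sequence of the isolated point from the other admissible
sequences; its second `2` is at position `k`. -/
def HasMarker (α : ℤ → ℕ) (k : ℤ) : Prop := IsWindow α k [1, 2] [2, 1, 1, 1]

/-- The period of the sequence that realises the isolated point. -/
abbrev isolatedWord : List ℕ := [2, 1, 1, 1, 1, 2, 1, 2, 2, 1]

lemma monotoneOn_add_one_div_cfEval :
    MonotoneOn (fun x => x + 1 / cfEval [1, 1, 1, 1] x) (Ici 1) := by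
  have expand (z : ℝ) (hz : 1 ≤ z) :
      1 / cfEval [1, 1, 1, 1] z = 3 / 5 + 1 / (5 * (5 * z + 3)) := by
    have : 0 < z := by linarith
    simp only [cfEval_cons, cfEval_nil, Nat.cast_one]
    field_simp
    ring
  intro x hx y hy hxy
  rw [mem_Ici] at hx hy
  have hdiff : 1 / (5 * (5 * x + 3)) - 1 / (5 * (5 * y + 3))
      = (y - x) / ((5 * x + 3) * (5 * y + 3)) := by
    have : 0 < 5 * x + 3 := by linarith
    have : 0 < 5 * y + 3 := by linarith
    field_simp
    ring
  have hle : (y - x) / ((5 * x + 3) * (5 * y + 3)) ≤ y - x :=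
    div_le_self (by linarith) (by nlinarith)
  simp only [expand x hx, expand y hy]
  linarith

lemma gapRight_le_of_tail {x y : ℝ} (hy : 1 ≤ y) (hyx : y ≤ x) (hx : cfEval [2, 1] tailValue ≤ x) :
    gapRight ≤ x + 1 / cfEval [1, 1, 1, 1] y := by
  have hT := tailValue_mem_Ioo.1
  have hone : 1 ≤ cfEval [2, 1] tailValue := by
    have hinv : 0 < 1 / cfEval [1] tailValue := one_div_pos.2 (cfEval_pos _ (by linarith))
    rw [cfEval_cons, Nat.cast_ofNat]
    linarith
  calc gapRight ≤ x + 1 / cfEval [1, 1, 1, 1] x :=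
        monotoneOn_add_one_div_cfEval hone (hone.trans hx) hx
    _ ≤ x + 1 / cfEval [1, 1, 1, 1] y := by
        have hmono := cfEval_monotoneOn (l := [1, 1, 1, 1]) (by decide)
          (show 0 < y by linarith) (show 0 < x by linarith) hyx
        gcongr
        exact cfEval_pos _ (by linarith)

namespace IsAdmissible

variable {α : ℤ → ℕ} {k : ℤ}

lemma isWindow_of_hasMarker (h : IsAdmissible α) (hm : HasMarker α k) :
    IsWindow α k [1, 2, 2, 1, 2, 1, 1] [2, 1, 1, 1, 1, 2, 1, 2] := by
  have hb := h.binary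
  have w₁ : IsWindow α k [1, 2, 2] [2, 1, 1, 1] := hb.left_two hm
    (h.not_isWindow (by norm_num [windowLower, wordLower, wordUpper]))
  have w₂ : IsWindow α k [1, 2, 2] [2, 1, 1, 1, 1] := hb.right_one w₁
    (h.not_isWindow (by norm_num [windowLower, wordLower, wordUpper]))
  have w₃ : IsWindow α k [1, 2, 2, 1] [2, 1, 1, 1, 1] := hb.left_one w₂
    (h.not_isWindow (by norm_num [windowLower, wordLower, wordUpper]))
  have w₄ : IsWindow α k [1, 2, 2, 1] [2, 1, 1, 1, 1, 2] := hb.right_two w₃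
    (h.not_isWindow (by norm_num [windowLower, wordLower, wordUpper]))
  have w₅ : IsWindow α k [1, 2, 2, 1, 2] [2, 1, 1, 1, 1, 2] := hb.left_two w₄
    (h.not_isWindow (by norm_num [windowLower, wordLower, wordUpper]))
  have w₆ : IsWindow α k [1, 2, 2, 1, 2] [2, 1, 1, 1, 1, 2, 1] := hb.right_one w₅
    (h.not_isWindow (by norm_num [windowLower, wordLower, wordUpper]))
  have w₇ : IsWindow α k [1, 2, 2, 1, 2, 1] [2, 1, 1, 1, 1, 2, 1] := hb.left_one w₆
    (h.not_isWindow (by norm_num [windowLower, wordLower, wordUpper]))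
  have w₈ : IsWindow α k [1, 2, 2, 1, 2, 1] [2, 1, 1, 1, 1, 2, 1, 2] := hb.right_two w₇
    (h.not_isWindow (by norm_num [windowLower, wordLower, wordUpper]))
  refine hb.left_one w₈ fun hw => ?_
  exact h.not_isWindow (u := [1, 2]) (by norm_num [windowLower, wordLower, wordUpper])
    (hw.shift_left (w := [1, 2, 2, 1, 2]))

/-- If the left tail were at least `[2; 1, tailValue]`, then so would be the larger of the tails on
the two sides of `1111`. There `λ ≥ gapRight`, because `gapRight` is the value for two tails equal
to `[2; 1, tailValue]`. -/
lemma leftTail_lt_of_readsRight (h : IsAdmissible α) (hr : ReadsRight α k [1, 1, 1, 1]) :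
    leftTail α (k - 1) < cfEval [2, 1] tailValue := by
  have hα := h.binary.pos
  have hw : IsWindow α (k + 4) [1, 1, 1, 1] [] :=
    IsWindow.shift_right (u := []) (w := [1, 1, 1, 1]) ⟨trivial, hr⟩
  have hright : rightTail α k = cfEval [1, 1, 1, 1] (rightTail α (k + 4)) :=
    rightTail_eq_cfEval hα hr
  have hleft : leftTail α (k + 4 - 1) = cfEval [1, 1, 1, 1] (leftTail α (k - 1)) := by
    rw [leftTail_eq_cfEval hα hw.left]
    congr 2
    simp only [List.length_cons, List.length_nil]
    ring
  by_contra! hle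
  rcases le_total (rightTail α (k + 4)) (leftTail α (k - 1)) with hlr | hlr
  · have := gapRight_le_of_tail (one_le_rightTail hα _) hlr hle
    rw [← hright] at this
    have hlam := lambdaVal_eq_leftTail_add hα (k - 1)
    rw [sub_add_cancel] at hlam
    linarith [h.lambdaVal_lt (k - 1)]
  · have := gapRight_le_of_tail (one_le_leftTail hα _) hlr (hle.trans hlr)
    rw [← hleft, ← lambdaVal_eq_rightTail_add hα] at this
    linarith [h.lambdaVal_lt (k + 4)]

lemma isWindow_one_of_hasMarker (h : IsAdmissible α) (hm : HasMarker α k) :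
    IsWindow α k [1, 2, 2, 1, 2, 1, 1, 1] [2, 1, 1, 1, 1, 2, 1, 2] := by
  have hα := h.binary.pos
  have hw := h.isWindow_of_hasMarker hm
  refine h.binary.left_one hw fun hw' => ?_
  have hlt : leftTail α k < cfEval [2, 1] tailValue := by
    simpa using h.leftTail_lt_of_readsRight (k := k + 1)
      (hw.of_append (u := []) (v := [2, 1, 1, 1, 1])).right.2
  have hl : ReadsLeft α k [2, 1, 2, 2, 1, 2, 1, 1] := ⟨hw.right.1, hw.left⟩
  have hle : tailValue ≤ leftTail α (k - 8) := by
    have := h.tailValue_le_leftTail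
      ((hw'.shift_left (w := [1, 2, 2, 1, 2, 1, 1])).of_append (u := [2]) (v := [1, 1]))
    simpa [sub_sub] using this
  have hT : 0 < tailValue := by linarith [tailValue_mem_Ioo.1]
  refine hlt.not_ge ?_
  calc cfEval [2, 1] tailValue = cfEval [2, 1, 2, 2, 1, 2, 1, 1] tailValue := by
        rw [show [2, 1, 2, 2, 1, 2, 1, 1] = [2, 1] ++ tailWord from rfl, cfEval_append,
          (cfEval_tailWord_eq_self_iff hT).2 rfl]
    _ ≤ cfEval [2, 1, 2, 2, 1, 2, 1, 1] (leftTail α (k - 8)) :=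
        cfEval_monotoneOn (by decide) hT (hT.trans_le hle) hle
    _ = leftTail α k := (leftTail_eq_cfEval hα hl).symm

lemma hasMarker_reflect_right (h : IsAdmissible α) (hm : HasMarker α k) :
    HasMarker (reflect α) (-5 - k) := by
  have hw := (h.isWindow_of_hasMarker hm).shift_right (w := [2, 1, 1, 1, 1, 2])
  rw [show -5 - k = 1 - (k + 6) by ring]
  exact (hw.of_append (u := [2, 1, 1, 1]) (v := [1, 2]) (v' := [])).reflect

lemma hasMarker_reflect_left (h : IsAdmissible α) (hm : HasMarker α k) :
    HasMarker (reflect α) (5 - k) := by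
  have hw := (h.isWindow_one_of_hasMarker hm).shift_left (w := [1, 2, 2, 1])
  rw [show 5 - k = 1 - (k - 4) by ring]
  exact (hw.of_append (u := [2, 1, 1, 1]) (v := [1, 2])).reflect

lemma hasMarker_add_ten (h : IsAdmissible α) (hm : HasMarker α k) : HasMarker α (k + 10) := by
  have := h.reflect.hasMarker_reflect_left (h.hasMarker_reflect_right hm)
  rw [reflect_reflect] at this
  convert this using 1
  ring

lemma hasMarker_sub_ten (h : IsAdmissible α) (hm : HasMarker α k) : HasMarker α (k - 10) := by
  have := h.reflect.hasMarker_reflect_right (h.hasMarker_reflect_left hm)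
  rw [reflect_reflect] at this
  convert this using 1
  ring

lemma hasMarker_add_mul_ten (h : IsAdmissible α) (hm : HasMarker α k) (q : ℤ) :
    HasMarker α (k + q * 10) := by
  induction q using Int.induction_on with
  | zero => simpa using hm
  | succ n ih => simpa [add_mul, add_assoc] using h.hasMarker_add_ten ih
  | pred n ih => simpa [sub_mul, add_sub_assoc] using h.hasMarker_sub_ten ih

lemma readsRight_isolatedWord (h : IsAdmissible α) (hm : HasMarker α k) :
    ReadsRight α k isolatedWord := by
  have hnext : IsWindow α (k + 10 - 2) [] ([2, 1] ++ [2, 1, 1, 1]) :=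
    (h.hasMarker_add_ten hm).shift_left (w := [1, 2])
  rw [add_sub_assoc] at hnext
  exact readsRight_append.2
    ⟨(h.isWindow_of_hasMarker hm).right, (readsRight_append.1 hnext.right).1⟩

lemma periodic_of_hasMarker (h : IsAdmissible α) (hm : HasMarker α k) :
    Function.Periodic α 10 :=
  periodic_of_forall_readsRight (l := isolatedWord) (by simp) fun q =>
    h.readsRight_isolatedWord (h.hasMarker_add_mul_ten hm q)

end IsAdmissible

lemma eq_of_cfEval_isolatedWord_eq_self {x : ℝ} (hx : 0 < x) (h : cfEval isolatedWord x = x) :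
    x = (105 + √33245) / 110 := by
  have hexp : cfEval isolatedWord x = (431 * x + 303) / (165 * x + 116) := by
    simp only [cfEval_cons, cfEval_nil, Nat.cast_one, Nat.cast_ofNat]
    field_simp
    ring
  rw [hexp, div_eq_iff (by positivity)] at h
  have := eq_of_mul_sq_eq_of_pos (a := 55) (b := 105) (c := 101) (by norm_num) (by norm_num) hx
    (by linear_combination -h / 3)
  norm_num at this
  exact this

lemma eq_of_cfEval_reverse_isolatedWord_eq_self {x : ℝ} (hx : 0 < x)
    (h : cfEval isolatedWord.reverse x = x) : x = (105 + √33245) / 202 := by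
  have hexp : cfEval isolatedWord.reverse x = (431 * x + 165) / (303 * x + 116) := by
    rw [show isolatedWord.reverse = [1, 2, 2, 1, 2, 1, 1, 1, 1, 2] from rfl]
    simp only [cfEval_cons, cfEval_nil, Nat.cast_one, Nat.cast_ofNat]
    field_simp
    ring
  rw [hexp, div_eq_iff (by positivity)] at h
  have := eq_of_mul_sq_eq_of_pos (a := 101) (b := 105) (c := 55) (by norm_num) (by norm_num) hx
    (by linear_combination -h / 3)
  norm_num at this
  exact this

lemma lambdaVal_eq_of_readsRight_isolatedWord {α : ℤ → ℕ} {k : ℤ} (hα : ∀ n, 0 < α n)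
    (hper : Function.Periodic α 10) (hr : ReadsRight α k isolatedWord) :
    lambdaVal α k = √33245 / 55 := by
  have hright := eq_of_cfEval_isolatedWord_eq_self (one_pos.trans_le (one_le_rightTail hα k))
    (cfEval_rightTail_eq_self hα hr fun n _ => hper n)
  have hw : IsWindow α (k - 10 + 10) isolatedWord.reverse [] :=
    IsWindow.shift_right (u := []) (w := isolatedWord) ⟨trivial, by
      rwa [← readsRight_add_of_periodic hper, sub_add_cancel]⟩
  rw [sub_add_cancel] at hw
  have hleft := eq_of_cfEval_reverse_isolatedWord_eq_self
    (one_pos.trans_le (one_le_leftTail hα (k - 1)))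
    (cfEval_leftTail_eq_self hα hw.left fun n _ => hper.sub_eq n)
  have hsq : √33245 ^ 2 = 33245 := Real.sq_sqrt (by norm_num)
  rw [lambdaVal_eq_rightTail_add hα, hright, hleft]
  field_simp
  linear_combination (-55) * hsq

/-! ### Values inside the gap -/

namespace IsAdmissible

variable {α : ℤ → ℕ} {k : ℤ}

lemma lambdaVal_le_gapLeft (h : IsAdmissible α) (hw : IsWindow α k [1, 2] [2, 1, 1, 2]) :
    lambdaVal α k ≤ gapLeft := by
  have hb := h.binary
  by_contra! hlt
  have w₁ : IsWindow α k [1, 2, 1] [2, 1, 1, 2] := hb.left_one hw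
    (hb.not_isWindow_of_lt_lambdaVal (hlt.trans_le' (lt_gapLeft.le.trans'
      (by norm_num [windowUpper, wordLower, wordUpper]))))
  have w₂ : IsWindow α k [1, 2, 1, 1] [2, 1, 1, 2] := hb.left_one w₁ fun w =>
    h.not_isWindow (u := [1, 2]) (by norm_num [windowLower, wordLower, wordUpper])
      (w.shift_left (w := [1, 2]))
  have w₃ : IsWindow α k [1, 2, 1, 1, 2] [2, 1, 1, 2] := hb.left_two w₂ fun w =>
    h.reflect.not_isWindow (u := [1, 2, 1]) (by norm_num [windowLower, wordLower, wordUpper])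
      ((w.shift_left (w := [1])).of_append (u := [2, 1, 1, 1]) (v := [1, 2, 1])).reflect
  have hright : tailValue ≤ rightTail α (k + 3) := h.tailValue_le_rightTail
    ((w₃.shift_right (w := [2, 1, 1])).of_append (u := [1, 1]) (v := [2]) (v' := []))
  have hleft : tailValue ≤ leftTail α (k - 1 - 4) := by
    have := h.tailValue_le_leftTail
      ((w₃.shift_left (w := [1, 2, 1, 1])).of_append (u := [2]) (v := [1, 1]) (u' := []))
    rwa [sub_right_comm] at this
  have hT : 0 < tailValue := by linarith [tailValue_mem_Ioo.1]
  refine hlt.not_ge ?_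
  rw [lambdaVal_eq_cfEval hb.pos (w₂.of_append (u := [1, 2, 1, 1]) (u' := [])
    (v := [2, 1, 1]) (v' := [2]))]
  exact add_le_add (cfEval_antitoneOn (by decide) hT (hT.trans_le hright) hright)
    (one_div_le_one_div_of_le (cfEval_pos _ hT)
      (cfEval_monotoneOn (by decide) hT (hT.trans_le hleft) hleft))

lemma lambdaVal_eq_of_hasMarker (h : IsAdmissible α) (hm : HasMarker α k) :
    lambdaVal α k = √33245 / 55 :=
  lambdaVal_eq_of_readsRight_isolatedWord h.binary.pos (h.periodic_of_hasMarker hm)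
    (h.readsRight_isolatedWord hm)

lemma lambdaVal_eq_of_isWindow (h : IsAdmissible α) (hw : IsWindow α k [1, 2] [2, 1, 1])
    (hlt : gapLeft < lambdaVal α k) : lambdaVal α k = √33245 / 55 :=
  h.lambdaVal_eq_of_hasMarker (h.binary.right_one hw fun w =>
    hlt.not_ge (h.lambdaVal_le_gapLeft w))

lemma lambdaVal_eq_of_gapLeft_lt (h : IsAdmissible α) (hlt : gapLeft < lambdaVal α k) :
    lambdaVal α k = √33245 / 55 := by
  have hb := h.binary
  have not_isWindow {u v : List ℕ} (huv : windowUpper u v ≤ 3.3084) : ¬ IsWindow α k u v :=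
    hb.not_isWindow_of_lt_lambdaVal ((huv.trans_lt lt_gapLeft).trans hlt)
  have w₁ : IsWindow α k [] [2] := hb.right_two (v := []) ⟨trivial, trivial⟩
    (not_isWindow (by norm_num [windowUpper, wordLower, wordUpper]))
  have w₂ : IsWindow α k [] [2, 1] :=
    hb.right_one w₁ (not_isWindow (by norm_num [windowUpper, wordLower, wordUpper]))
  have w₃ : IsWindow α k [1] [2, 1] :=
    hb.left_one w₂ (not_isWindow (by norm_num [windowUpper, wordLower, wordUpper]))
  by_cases w₄ : IsWindow α k [1, 2] [2, 1]
  · exact h.lambdaVal_eq_of_isWindow (hb.right_one w₄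
      (h.not_isWindow (by norm_num [windowLower, wordLower, wordUpper]))) hlt
  · have w₅ : IsWindow α k [1, 1] [2, 1, 2] := hb.right_two (hb.left_one w₃ w₄)
      (not_isWindow (by norm_num [windowUpper, wordLower, wordUpper]))
    have w₆ : IsWindow (reflect α) (-k) [1, 2] [2, 1, 1] := by
      simpa using (w₅.shift_right (w := [2])).reflect
    have hrefl : lambdaVal (reflect α) (-k) = lambdaVal α k := by
      rw [lambdaVal_reflect hb.pos, neg_neg]
    rw [← hrefl] at hlt ⊢
    exact h.reflect.lambdaVal_eq_of_isWindow w₆ hlt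

end IsAdmissible

lemma markovValue_eq_of_mem_Ioo {α : ℤ → ℕ} (hα : ∀ n, 0 < α n)
    (hbdd : BddAbove (range (lambdaVal α))) (hmem : markovValue α ∈ Ioo gapLeft gapRight) :
    markovValue α = √33245 / 55 := by
  have hlt (k : ℤ) : lambdaVal α k < gapRight := (le_ciSup hbdd k).trans_lt hmem.2
  have h : IsAdmissible α :=
    ⟨isBinary_of_lambdaVal_lt hα fun k => by linarith [hlt k, gapRight_lt], hlt⟩
  obtain ⟨k, hk⟩ := exists_lt_of_lt_ciSup hmem.1
  have hle (j : ℤ) : lambdaVal α j ≤ √33245 / 55 :=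
    (le_or_gt (lambdaVal α j) gapLeft).elim (fun hj => hj.trans sqrt_div_mem_Ioo.1.le)
      fun hj => (h.lambdaVal_eq_of_gapLeft_lt hj).le
  exact (ciSup_le hle).antisymm ((h.lambdaVal_eq_of_gapLeft_lt hk).ge.trans (le_ciSup hbdd k))

lemma mem_markovSpectrum_of_isGreatest {α : ℤ → ℕ} {x : ℝ} (hα : ∀ n, 0 < α n)
    (hx : IsGreatest (range (lambdaVal α)) x) : x ∈ markovSpectrum :=
  ⟨α, hα, ⟨x, hx.2⟩, hx.csSup_eq⟩

/-! ### Sequences that realise the three values -/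

/-- The bi-infinite repetition of the nonempty word `w`, starting at position `0`; the default
value `1` is never used. -/
def periodicSeq (w : List ℕ) (n : ℤ) : ℕ := w.getD (n % w.length).toNat 1

lemma periodic_periodicSeq (w : List ℕ) : Function.Periodic (periodicSeq w) w.length := fun n => by
  rw [periodicSeq, periodicSeq, Int.add_emod_right]

lemma isBinary_periodicSeq {w : List ℕ} (hw : ∀ a ∈ w, a = 1 ∨ a = 2) :
    IsBinary (periodicSeq w) := fun _ => forall_getD (p := fun a => a = 1 ∨ a = 2) (Or.inl rfl) hw _

lemma isBinary_periodicSeq_isolatedWord : IsBinary (periodicSeq isolatedWord) :=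
  isBinary_periodicSeq (by decide)

lemma lambdaVal_periodicSeq_isolatedWord_zero :
    lambdaVal (periodicSeq isolatedWord) 0 = √33245 / 55 :=
  lambdaVal_eq_of_readsRight_isolatedWord isBinary_periodicSeq_isolatedWord.pos
    (periodic_periodicSeq _) ⟨rfl, rfl, rfl, rfl, rfl, rfl, rfl, rfl, rfl, rfl, trivial⟩

lemma periodicSeq_isolatedWord_five_sub (n : ℤ) :
    periodicSeq isolatedWord (5 - n) = periodicSeq isolatedWord n := by
  obtain ⟨q, r, hr, rfl⟩ := exists_eq_mul_add n (m := 10) (by norm_num)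
  have hper : Function.Periodic (periodicSeq isolatedWord) (q * (10 : ℕ)) := by
    simpa using (periodic_periodicSeq isolatedWord).int_mul q
  rw [add_comm, hper, ← sub_sub, hper.sub_eq]
  interval_cases r <;> rfl

lemma lambdaVal_periodicSeq_isolatedWord_le (k : ℤ) :
    lambdaVal (periodicSeq isolatedWord) k ≤ √33245 / 55 := by
  have hb := isBinary_periodicSeq_isolatedWord
  have hzero := lambdaVal_periodicSeq_isolatedWord_zero
  have hfive := lambdaVal_sub_of_symmetric hb.pos periodicSeq_isolatedWord_five_sub 0
  have hread : ReadsRight (periodicSeq isolatedWord) 0 (isolatedWord ++ [2]) :=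
    ⟨rfl, rfl, rfl, rfl, rfl, rfl, rfl, rfl, rfl, rfl, rfl, trivial⟩
  obtain ⟨q, r, hr, rfl⟩ := exists_eq_mul_add k (m := 10) (by norm_num)
  have hper : Function.Periodic (lambdaVal (periodicSeq isolatedWord)) (q * (10 : ℕ)) := by
    simpa using (lambdaVal_periodic (periodic_periodicSeq isolatedWord)).int_mul q
  rw [add_comm, hper]
  rcases eq_or_ne r 0 with rfl | hzero_ne
  · exact hzero.le
  rcases eq_or_ne r 5 with rfl | hfive_ne
  · exact hfive.trans_le hzero.le
  have hle := (hb.lambdaVal_mem_Icc (hread.isWindow_add (r := r) (hr.le.trans (by decide)))).2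
  rw [zero_add] at hle
  refine hle.trans ((lt_gapLeft.trans sqrt_div_mem_Ioo.1).le.trans' ?_)
  interval_cases r <;> first | contradiction | norm_num [windowUpper, wordLower, wordUpper]

lemma sqrt_div_mem_markovSpectrum : √33245 / 55 ∈ markovSpectrum :=
  mem_markovSpectrum_of_isGreatest isBinary_periodicSeq_isolatedWord.pos
    ⟨⟨0, lambdaVal_periodicSeq_isolatedWord_zero⟩,
      forall_mem_range.2 lambdaVal_periodicSeq_isolatedWord_le⟩

/-- For a palindrome `c`, the sequence that shows `c` at the positions `-c.length, ..., -1`, repeats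
`w` from position `0` to the right and repeats `w` from position `-1 - c.length` to the left. The
maximum makes the symmetry under `n ↦ -1 - c.length - n` visible. -/
def flankedSeq (c w : List ℕ) (n : ℤ) : ℕ :=
  let m := max n (-1 - c.length - n)
  if 0 ≤ m then periodicSeq w m else c.getD (-1 - m).toNat 1

section Flanked

variable {c w : List ℕ}

lemma flankedSeq_sub (c w : List ℕ) (n : ℤ) :
    flankedSeq c w (-1 - c.length - n) = flankedSeq c w n := by
  simp only [flankedSeq, sub_sub_cancel, max_comm n]

lemma flankedSeq_of_nonneg {n : ℤ} (hn : 0 ≤ n) : flankedSeq c w n = periodicSeq w n := by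
  simp only [flankedSeq, max_eq_left (show -1 - (c.length : ℤ) - n ≤ n by omega), if_pos hn]

lemma isBinary_flankedSeq (hc : ∀ a ∈ c, a = 1 ∨ a = 2) (hw : ∀ a ∈ w, a = 1 ∨ a = 2) :
    IsBinary (flankedSeq c w) := fun n => by
  rw [flankedSeq]
  split_ifs
  · exact isBinary_periodicSeq hw _
  · exact forall_getD (p := fun a => a = 1 ∨ a = 2) (Or.inl rfl) hc _

lemma readsRight_flankedSeq_tailWord (c : List ℕ) {q : ℤ} (hq : 0 ≤ q) :
    ReadsRight (flankedSeq c tailWord) (q * 6) (tailWord ++ [2]) := by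
  have hper : Function.Periodic (periodicSeq tailWord) (q * 6) := by
    simpa using (periodic_periodicSeq tailWord).int_mul q
  rw [readsRight_congr (β := periodicSeq tailWord) fun n hn => flankedSeq_of_nonneg (by linarith),
    ← zero_add (q * 6), readsRight_add_of_periodic hper]
  exact ⟨rfl, rfl, rfl, rfl, rfl, rfl, rfl, trivial⟩

variable (hc : ∀ a ∈ c, a = 1 ∨ a = 2)
include hc

lemma isBinary_flankedSeq_tailWord : IsBinary (flankedSeq c tailWord) :=
  isBinary_flankedSeq hc (by decide)

lemma rightTail_flankedSeq_tailWord : rightTail (flankedSeq c tailWord) 0 = tailValue := by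
  have hα := (isBinary_flankedSeq_tailWord hc).pos
  have hread : ReadsRight (flankedSeq c tailWord) 0 tailWord :=
    (readsRight_append.1 (readsRight_flankedSeq_tailWord c le_rfl)).1
  refine (cfEval_tailWord_eq_self_iff (one_pos.trans_le (one_le_rightTail hα 0))).1
    (cfEval_rightTail_eq_self hα hread fun n hn => ?_)
  rw [flankedSeq_of_nonneg hn, flankedSeq_of_nonneg (by positivity), periodic_periodicSeq]

lemma leftTail_flankedSeq_tailWord :
    leftTail (flankedSeq c tailWord) (-1 - c.length) = tailValue := by
  rw [← rightTail_flankedSeq_tailWord hc,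
    ← leftTail_sub_of_symmetric (flankedSeq_sub c tailWord) 0, sub_zero]

lemma lambdaVal_flankedSeq_tailWord {u v : List ℕ} (hlen : c.length = u.length + v.length)
    (hw : IsWindow (flankedSeq c tailWord) (-v.length) u v) :
    lambdaVal (flankedSeq c tailWord) (-v.length) =
      cfEval v tailValue + 1 / cfEval u tailValue := by
  rw [lambdaVal_eq_cfEval (isBinary_flankedSeq_tailWord hc).pos hw, neg_add_cancel,
    rightTail_flankedSeq_tailWord hc, ← leftTail_flankedSeq_tailWord hc, hlen]
  congr 4
  push_cast
  ring

lemma lambdaVal_flankedSeq_tailWord_le_of_nonneg {k : ℤ} (hk : 0 ≤ k) :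
    lambdaVal (flankedSeq c tailWord) k ≤ 3.3084 := by
  have hb := isBinary_flankedSeq_tailWord hc
  obtain ⟨q, r, hr, rfl⟩ := exists_eq_mul_add k (m := 6) (by norm_num)
  have hq : 0 ≤ q := by omega
  have hw := (readsRight_flankedSeq_tailWord c hq).isWindow_add (r := r) (hr.le.trans (by decide))
  refine (hb.lambdaVal_mem_Icc hw).2.trans ?_
  interval_cases r <;> norm_num [windowUpper, wordLower, wordUpper]

lemma flankedSeq_mem_markovSpectrum {u v : List ℕ} (hlen : c.length = u.length + v.length)
    (hw : IsWindow (flankedSeq c tailWord) (-v.length) u v)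
    (hone : ∀ k < 0, -1 - (c.length : ℤ) < k → flankedSeq c tailWord k = 1 ∨
      k = -v.length ∨ k = -1 - c.length + v.length)
    (hlt : 3.3084 < cfEval v tailValue + 1 / cfEval u tailValue) :
    cfEval v tailValue + 1 / cfEval u tailValue ∈ markovSpectrum := by
  have hb := isBinary_flankedSeq_tailWord hc
  have hvalue := lambdaVal_flankedSeq_tailWord hc hlen hw
  have hsymm := lambdaVal_sub_of_symmetric hb.pos (flankedSeq_sub c tailWord)
  refine mem_markovSpectrum_of_isGreatest hb.pos ⟨⟨_, hvalue⟩, forall_mem_range.2 fun k => ?_⟩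
  rcases le_or_gt 0 k with hk | hk
  · exact (lambdaVal_flankedSeq_tailWord_le_of_nonneg hc hk).trans hlt.le
  rcases le_or_gt k (-1 - c.length) with hk' | hk'
  · rw [← hsymm]
    exact (lambdaVal_flankedSeq_tailWord_le_of_nonneg hc (by linarith)).trans hlt.le
  rcases hone k hk hk' with h1 | rfl | rfl
  · have hwindow : IsWindow (flankedSeq c tailWord) k [] [1] := ⟨trivial, h1, trivial⟩
    exact ((hb.lambdaVal_mem_Icc hwindow).2.trans
      (by norm_num [windowUpper, wordLower, wordUpper])).trans hlt.le
  · exact hvalue.le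
  · rw [← hvalue, ← hsymm (-v.length), sub_neg_eq_add]

end Flanked

lemma gapLeft_mem_markovSpectrum : gapLeft ∈ markovSpectrum :=
  flankedSeq_mem_markovSpectrum (c := [1, 1, 2, 1, 2, 1, 1]) (by decide) rfl
    ⟨⟨rfl, rfl, rfl, rfl, trivial⟩, rfl, rfl, rfl, trivial⟩
    (fun k hk hk' => by simp at hk'; interval_cases k <;> decide) lt_gapLeft

lemma gapRight_mem_markovSpectrum : gapRight ∈ markovSpectrum :=
  flankedSeq_mem_markovSpectrum (c := [1, 2, 1, 1, 1, 1, 2, 1]) (by decide) rfl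
    ⟨⟨rfl, rfl, rfl, rfl, rfl, rfl, trivial⟩, rfl, rfl, trivial⟩
    (fun k hk hk' => by simp at hk'; interval_cases k <;> decide)
    (lt_gapLeft.trans (sqrt_div_mem_Ioo.1.trans sqrt_div_mem_Ioo.2))

/-- The intersection of the Markov spectrum with the open interval consists of
exactly one (hence isolated) point, and both endpoints belong to the Markov
spectrum. -/
theorem markov_gap_12 :
    markovSpectrum ∩ Ioo ((11 + 35 * Real.sqrt 87) / 102) ((56508 + 2716 * Real.sqrt 87) / 24687) = {(Real.sqrt 33245 / 55 : ℝ)} ∧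
    ((11 + 35 * Real.sqrt 87) / 102) ∈ markovSpectrum ∧ ((56508 + 2716 * Real.sqrt 87) / 24687) ∈ markovSpectrum := by
  rw [← gapLeft_eq, ← gapRight_eq]
  refine ⟨Subset.antisymm ?_ (singleton_subset_iff.2
    ⟨sqrt_div_mem_markovSpectrum, sqrt_div_mem_Ioo⟩), gapLeft_mem_markovSpectrum,
    gapRight_mem_markovSpectrum⟩
  rintro x ⟨⟨α, hα, hbdd, rfl⟩, hx⟩
  exact markovValue_eq_of_mem_Ioo hα hbdd hx
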